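/- arXiv:1709.06023 — 2 statements merged into one kernel-verified Lean document; each statement's English description precedes it below -/
import Mathlib

section
/- Suppose an algebra A has Day operations d_0,...,d_4 (witnessing 4-modularity). Then for every q ≥ 2 and all congruences α, β, γ of A, the algebra is (2^q − 1, 2^q)-modular: α ∩ (β ∘ (α∩γ) ∘ ⋯ ∘ β) with 2^q − 1 alternating factors is contained in (α∩β) ∘ (α∩γ) ∘ ⋯ with 2^q alternating factors. -/
/-- Relational composition: `rcomp R S a c ↔ ∃ b, R a b ∧ S b c`. -/
def rcomp {A : Type*} (R S : A → A → Prop) : A → A → Prop := fun a c => ∃ b, R a b ∧ S b c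

/-- Converse of a relation. -/
def rconv {A : Type*} (R : A → A → Prop) : A → A → Prop := fun a b => R b a

/-- Intersection of relations. -/
def rinter {A : Type*} (R S : A → A → Prop) : A → A → Prop := fun a b => R a b ∧ S a b

/-- Inclusion of relations. -/
def rsub {A : Type*} (R S : A → A → Prop) : Prop := ∀ a b, R a b → S a b

/-- Alternating composition with `m` factors, starting with `R`:
`altn R S m = R ∘ S ∘ R ∘ ⋯` (`m` factors, `m-1` occurrences of `∘`). -/
def altn {A : Type*} : (A → A → Prop) → (A → A → Prop) → ℕ → A → A → Prop
  | _, _, 0 => Eq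
  | R, S, m + 1 => rcomp R (altn S R m)

/-- Composition `T i ∘ T (i+1) ∘ ⋯ ∘ T (i+m-1)` of `m` relations starting at index `i`. -/
def chainFrom {A : Type*} (T : ℕ → A → A → Prop) : ℕ → ℕ → A → A → Prop
  | _, 0 => Eq
  | i, m + 1 => rcomp (T i) (chainFrom T (i + 1) m)

/-- The nested expression `A_ℓ`: `nest α β γ 1 = α∩(β ∘ (α∩γ) ∘ β)`, and
`nest α β γ (ℓ+1) = α∩(β ∘ (α ∩ nest α γ β ℓ) ∘ β)` (the inner one swaps `β` and `γ`). -/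
def nest {A : Type*} : (A → A → Prop) → (A → A → Prop) → (A → A → Prop) → ℕ → A → A → Prop
  | _, _, γ, 0 => γ
  | α, β, γ, ℓ + 1 => rinter α (rcomp β (rcomp (rinter α (nest α γ β ℓ)) β))

/-- A ternary operation preserves a relation. -/
def pres3 {A : Type*} (f : A → A → A → A) (R : A → A → Prop) : Prop :=
  ∀ a₁ a₂ a₃ b₁ b₂ b₃, R a₁ b₁ → R a₂ b₂ → R a₃ b₃ → R (f a₁ a₂ a₃) (f b₁ b₂ b₃)

/-- A quaternary operation preserves a relation. -/
def pres4 {A : Type*} (f : A → A → A → A → A) (R : A → A → Prop) : Prop :=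
  ∀ a₁ a₂ a₃ a₄ b₁ b₂ b₃ b₄, R a₁ b₁ → R a₂ b₂ → R a₃ b₃ → R a₄ b₄ →
    R (f a₁ a₂ a₃ a₄) (f b₁ b₂ b₃ b₄)

/-- Day equations for quaternary operations `d 0, …, d k`. -/
def DayEqs {A : Type*} (k : ℕ) (d : ℕ → A → A → A → A → A) : Prop :=
  (∀ i, i ≤ k → ∀ x y, d i x y y x = x) ∧
  (∀ x y z w, d 0 x y z w = x) ∧
  (∀ i, i < k → i % 2 = 0 → ∀ x w, d i x x w w = d (i + 1) x x w w) ∧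
  (∀ i, i < k → i % 2 = 1 → ∀ x y w, d i x y y w = d (i + 1) x y y w) ∧
  (∀ x y z w, d k x y z w = w)

/-- Jónsson equations for ternary operations `j 0, …, j (n+1)` witnessing `n+1`-distributivity. -/
def JonssonEqs {A : Type*} (n : ℕ) (j : ℕ → A → A → A → A) : Prop :=
  (∀ i, i ≤ n + 1 → ∀ x y, j i x y x = x) ∧
  (∀ x y z, j 0 x y z = x) ∧
  (∀ i, i ≤ n → i % 2 = 1 → ∀ x z, j i x z z = j (i + 1) x z z) ∧
  (∀ i, i ≤ n → i % 2 = 0 → ∀ x z, j i x x z = j (i + 1) x x z) ∧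
  (∀ x y z, j (n + 1) x y z = z)

/-- Gumm equations for ternary operations `p, j 1, …, j (n+1)`. -/
def GummEqs {A : Type*} (n : ℕ) (p : A → A → A → A) (j : ℕ → A → A → A → A) : Prop :=
  (∀ i, 1 ≤ i → i ≤ n + 1 → ∀ x y, j i x y x = x) ∧
  (∀ x z, p x z z = x) ∧
  (∀ x z, p x x z = j 1 x x z) ∧
  (∀ i, 1 ≤ i → i ≤ n → i % 2 = 1 → ∀ x z, j i x z z = j (i + 1) x z z) ∧
  (∀ i, 1 ≤ i → i ≤ n → i % 2 = 0 → ∀ x z, j i x x z = j (i + 1) x x z) ∧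
  (∀ x y z, j (n + 1) x y z = z)

/-- Defective Gumm equations: all Gumm equations except that `j n (x,y,x) = x` is not assumed. -/
def DefGummEqs {A : Type*} (n : ℕ) (p : A → A → A → A) (j : ℕ → A → A → A → A) : Prop :=
  (∀ i, 1 ≤ i → i ≤ n + 1 → i ≠ n → ∀ x y, j i x y x = x) ∧
  (∀ x z, p x z z = x) ∧
  (∀ x z, p x x z = j 1 x x z) ∧
  (∀ i, 1 ≤ i → i ≤ n → i % 2 = 1 → ∀ x z, j i x z z = j (i + 1) x z z) ∧
  (∀ i, 1 ≤ i → i ≤ n → i % 2 = 0 → ∀ x z, j i x x z = j (i + 1) x x z) ∧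
  (∀ x y z, j (n + 1) x y z = z)

/-!
Put `δ = α ∩ γ` and let `Θ = β ∘ δ ∘ ⋯ ∘ β` have `2m + 1` factors. As `β` and `δ` are equivalences,
`Θ` splits at its middle factor as `R ∘ R˘`, where `R` consists of the first `m + 1` factors and is
preserved by the Day operations. If `a α e` and `a Θ b δ c Θ e`, then the elements
`d_i(a, b, c, e)` form a path from `a` to `e` inside one `α`-class whose steps lie alternately in
`Θ` and in `δ`; the form `R ∘ R˘` is what makes the even steps lie in `Θ` itself. Hence `k = 2r`
gives `α ∩ (Θ ∘ δ ∘ Θ) ⊆ (α ∩ Θ) ∘ δ ∘ ⋯ ∘ δ` with `2r` factors. Passing from `Θ` to `Θ ∘ δ ∘ Θ`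
turns `2 ^ q - 1` factors into `2 ^ (q + 1) - 1`, and multiplies the number of factors on the right
by `r`, because adjacent copies of `δ` merge.
-/

section AlternatingCompositions

variable {A : Type*} {P Q R S R' S' T δ : A → A → Prop}

theorem rcomp_assoc : rcomp (rcomp R S) T = rcomp R (rcomp S T) := by
  funext a d
  simp only [rcomp]
  grind

theorem rconv_rcomp : rconv (rcomp R S) = rcomp (rconv S) (rconv R) := by
  funext a c
  simp only [rconv, rcomp, and_comm]

theorem rcomp_mono (hR : rsub R R') (hS : rsub S S') : rsub (rcomp R S) (rcomp R' S') :=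
  fun _ _ ⟨b, hab, hbc⟩ => ⟨b, hR _ _ hab, hS _ _ hbc⟩

theorem rcomp_self_of_equivalence (hδ : Equivalence δ) : rcomp δ δ = δ := by
  funext a c
  exact propext ⟨fun ⟨_, hab, hbc⟩ => hδ.trans hab hbc, fun hac => ⟨a, hδ.refl a, hac⟩⟩

theorem rconv_of_equivalence (hδ : Equivalence δ) : rconv δ = δ := by
  funext a b
  exact propext ⟨hδ.symm, hδ.symm⟩

theorem altn_succ (n : ℕ) : altn R S (n + 1) = rcomp R (altn S R n) := rfl

theorem altn_one : altn R S 1 = R := by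
  funext a c
  simp only [altn, rcomp, exists_eq_right]

theorem altn_two_mul_add (m n : ℕ) :
    altn R S (2 * m + n) = rcomp (altn R S (2 * m)) (altn R S n) := by
  induction m with
  | zero =>
    funext a c
    simp only [altn, rcomp, mul_zero, zero_add, exists_eq_left']
  | succ m ih =>
    rw [show 2 * (m + 1) + n = 2 * m + n + 1 + 1 by ring, mul_add_one]
    simp only [altn, ih, rcomp_assoc]

theorem altn_two_mul_add_one_add (m n : ℕ) :
    altn R S (2 * m + 1 + n) = rcomp (altn R S (2 * m + 1)) (altn S R n) := by
  rw [add_right_comm]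
  simp only [altn, altn_two_mul_add, rcomp_assoc]

theorem altn_of_forall_lt (n : ℕ) (x : ℕ → A)
    (hR : ∀ i, i < n → i % 2 = 0 → R (x i) (x (i + 1)))
    (hS : ∀ i, i < n → i % 2 = 1 → S (x i) (x (i + 1))) :
    altn R S n (x 0) (x n) := by
  induction n generalizing R S x with
  | zero => rfl
  | succ n ih =>
    exact ⟨x 1, hR 0 n.succ_pos rfl, ih (fun i => x (i + 1))
      (fun i _ _ => hS (i + 1) (by omega) (by omega))
      (fun i _ _ => hR (i + 1) (by omega) (by omega))⟩

theorem altn_two_mul_rsub_of_rcomp_rsub {m : ℕ} (h : rsub (rcomp Q δ) (altn P δ (2 * m)))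
    (n : ℕ) : rsub (altn Q δ (2 * n)) (altn P δ (2 * (n * m))) := by
  induction n with
  | zero => simp [rsub, altn]
  | succ n ih =>
    rw [show 2 * ((n + 1) * m) = 2 * m + 2 * (n * m) by ring, altn_two_mul_add, mul_add_one]
    simp only [altn, ← rcomp_assoc]
    exact rcomp_mono h ih

theorem altn_two_mul_rcomp_self (hδ : Equivalence δ) {n : ℕ} (hn : 0 < n) :
    rcomp (altn P δ (2 * n)) δ = altn P δ (2 * n) := by
  obtain ⟨m, rfl⟩ := Nat.exists_eq_add_one.mpr hn
  rw [show 2 * (m + 1) = 2 * m + 1 + 1 by ring, altn_two_mul_add_one_add, altn_one, rcomp_assoc,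
    rcomp_self_of_equivalence hδ]

-- Idempotence of the middle factor lets it be shared by the two halves.
theorem altn_two_mul_add_one_eq_rcomp_rconv (hR : Equivalence R) (hS : Equivalence S) (m : ℕ) :
    altn R S (2 * m + 1) = rcomp (altn R S (m + 1)) (rconv (altn R S (m + 1))) := by
  induction m generalizing R S with
  | zero => rw [mul_zero, altn_one, rconv_of_equivalence hR, rcomp_self_of_equivalence hR]
  | succ m ih =>
    calc altn R S (2 * (m + 1) + 1)
        = rcomp R (rcomp (altn S R (2 * m + 1)) R) := by
          rw [altn_succ, mul_add_one, altn_two_mul_add_one_add m 1, altn_one]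
      _ = rcomp R (rcomp (rcomp (altn S R (m + 1)) (rconv (altn S R (m + 1)))) (rconv R)) := by
          rw [ih hS hR, rconv_of_equivalence hR]
      _ = rcomp (altn R S (m + 1 + 1)) (rconv (altn R S (m + 1 + 1))) := by
          rw [altn_succ (m + 1), rconv_rcomp]
          simp only [rcomp_assoc]

end AlternatingCompositions

section Preservation

variable {A : Type*} {f : A → A → A → A → A} {R S : A → A → Prop}

theorem pres4.rinter (hR : pres4 f R) (hS : pres4 f S) : pres4 f (rinter R S) :=
  fun _ _ _ _ _ _ _ _ h₁ h₂ h₃ h₄ =>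
    ⟨hR _ _ _ _ _ _ _ _ h₁.1 h₂.1 h₃.1 h₄.1, hS _ _ _ _ _ _ _ _ h₁.2 h₂.2 h₃.2 h₄.2⟩

theorem pres4.rcomp (hR : pres4 f R) (hS : pres4 f S) : pres4 f (rcomp R S) :=
  fun _ _ _ _ _ _ _ _ ⟨_, h₁, k₁⟩ ⟨_, h₂, k₂⟩ ⟨_, h₃, k₃⟩ ⟨_, h₄, k₄⟩ =>
    ⟨_, hR _ _ _ _ _ _ _ _ h₁ h₂ h₃ h₄, hS _ _ _ _ _ _ _ _ k₁ k₂ k₃ k₄⟩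

theorem pres4.altn (hR : pres4 f R) (hS : pres4 f S) (n : ℕ) : pres4 f (altn R S n) := by
  induction n generalizing R S with
  | zero =>
    rintro _ _ _ _ _ _ _ _ rfl rfl rfl rfl
    rfl
  | succ n ih => exact hR.rcomp (ih hS hR)

end Preservation

namespace DayEqs

variable {A : Type*} {k : ℕ} {d : ℕ → A → A → A → A → A} {α β δ R : A → A → Prop}
  {a b c e : A}

theorem rel_left_apply (hday : DayEqs k d) (hα : Equivalence α) {i : ℕ} (hi : i ≤ k)
    (hdα : pres4 (d i) α) (hbc : α b c) (hae : α a e) : α a (d i a b c e) := by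
  have h : α (d i a b b a) (d i a b c e) :=
    hdα _ _ _ _ _ _ _ _ (hα.refl a) (hα.refl b) hbc hae
  rwa [hday.1 i hi] at h

theorem rel_apply_succ_of_odd (hday : DayEqs k d) (hδ : Equivalence δ)
    (hdδ : ∀ i, i ≤ k → pres4 (d i) δ) {i : ℕ} (hi : i < k) (hi' : i % 2 = 1)
    (hbc : δ b c) : δ (d i a b c e) (d (i + 1) a b c e) := by
  have h (j : ℕ) (hj : j ≤ k) : δ (d j a b b e) (d j a b c e) :=
    hdδ j hj _ _ _ _ _ _ _ _ (hδ.refl a) (hδ.refl b) hbc (hδ.refl e)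
  have hi_rel := h i hi.le
  rw [hday.2.2.2.1 i hi hi'] at hi_rel
  exact hδ.trans (hδ.symm hi_rel) (h (i + 1) hi)

-- For a tolerance not of the form `R ∘ R˘` the same argument only gives two steps, through
-- `d i a a e e`.
theorem rcomp_rconv_apply_succ_of_even (hday : DayEqs k d)
    (hdR : ∀ i, i ≤ k → pres4 (d i) R) {i : ℕ} (hi : i < k) (hi' : i % 2 = 0)
    (hab : rcomp R (rconv R) a b) (hce : rcomp R (rconv R) c e) :
    rcomp R (rconv R) (d i a b c e) (d (i + 1) a b c e) := by
  obtain ⟨u, hau, hbu⟩ := hab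
  obtain ⟨v, hcv, hev⟩ := hce
  have h (j : ℕ) (hj : j ≤ k) : R (d j a b c e) (d j u u v v) :=
    hdR j hj _ _ _ _ _ _ _ _ hau hbu hcv hev
  refine ⟨d i u u v v, h i hi.le, ?_⟩
  rw [hday.2.2.1 i hi hi']
  exact h (i + 1) hi

theorem rinter_rcomp_rsub_altn (hday : DayEqs k d) (hα : Equivalence α) (hδ : Equivalence δ)
    (hδα : rsub δ α) (hdα : ∀ i, i ≤ k → pres4 (d i) α) (hdδ : ∀ i, i ≤ k → pres4 (d i) δ)
    (hdR : ∀ i, i ≤ k → pres4 (d i) R) :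
    rsub (rinter α (rcomp (rcomp R (rconv R)) (rcomp δ (rcomp R (rconv R)))))
      (altn (rinter α (rcomp R (rconv R))) δ k) := by
  rintro a e ⟨hae, b, hab, c, hbc, hce⟩
  have hα_left (i : ℕ) (hi : i ≤ k) : α a (d i a b c e) :=
    hday.rel_left_apply hα hi (hdα i hi) (hδα _ _ hbc) hae
  have hpath := altn_of_forall_lt (R := rinter α (rcomp R (rconv R))) (S := δ) k
    (fun i => d i a b c e)
    (fun i hi hi' => ⟨hα.trans (hα.symm (hα_left i hi.le)) (hα_left (i + 1) hi),
      hday.rcomp_rconv_apply_succ_of_even hdR hi hi' hab hce⟩)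
    (fun i hi hi' => hday.rel_apply_succ_of_odd hδ hdδ hi hi' hbc)
  simpa only [hday.2.1, hday.2.2.2.2] using hpath

theorem rinter_altn_rsub_altn_rinter_altn (hday : DayEqs k d) (hα : Equivalence α)
    (hβ : Equivalence β) (hδ : Equivalence δ) (hδα : rsub δ α)
    (hdα : ∀ i, i ≤ k → pres4 (d i) α) (hdβ : ∀ i, i ≤ k → pres4 (d i) β)
    (hdδ : ∀ i, i ≤ k → pres4 (d i) δ) (m : ℕ) :
    rsub (rinter α (altn β δ (2 * (2 * m + 1) + 1)))
      (altn (rinter α (altn β δ (2 * m + 1))) δ k) := by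
  have hsplit : altn β δ (2 * (2 * m + 1) + 1) =
      rcomp (altn β δ (2 * m + 1)) (rcomp δ (altn β δ (2 * m + 1))) := by
    rw [show 2 * (2 * m + 1) + 1 = 2 * m + 1 + (2 * m + 1 + 1) by ring,
      altn_two_mul_add_one_add, altn_succ (2 * m + 1)]
  rw [hsplit, altn_two_mul_add_one_eq_rcomp_rconv hβ hδ]
  exact hday.rinter_rcomp_rsub_altn hα hδ hδα hdα hdδ
    fun i hi => (hdβ i hi).altn (hdδ i hi) (m + 1)

-- The trailing `δ` on the left is what makes the induction hypothesis applicable to each of the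
-- `r` consecutive pairs of factors produced by the Day terms.
theorem rcomp_rinter_altn_rsub {r : ℕ} (hr : 0 < r) (hday : DayEqs (2 * r) d)
    (hα : Equivalence α) (hβ : Equivalence β) (hδ : Equivalence δ) (hδα : rsub δ α)
    (hdα : ∀ i, i ≤ 2 * r → pres4 (d i) α) (hdβ : ∀ i, i ≤ 2 * r → pres4 (d i) β)
    (hdδ : ∀ i, i ≤ 2 * r → pres4 (d i) δ) (q : ℕ) :
    rsub (rcomp (rinter α (altn β δ (2 ^ (q + 1) - 1))) δ)
      (altn (rinter α β) δ (2 * r ^ q)) := by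
  have two_pow_succ_sub_one (n : ℕ) : 2 ^ (n + 1) - 1 = 2 * (2 ^ n - 1) + 1 := by
    have := Nat.one_le_two_pow (n := n)
    omega
  induction q with
  | zero =>
    simp only [zero_add, pow_one, pow_zero, mul_one, Nat.add_one_sub_one, altn_one]
    rw [altn_succ, altn_one]
    exact fun _ _ h => h
  | succ q ih =>
    have hdouble : rsub (rinter α (altn β δ (2 ^ (q + 1 + 1) - 1)))
        (altn (rinter α (altn β δ (2 ^ (q + 1) - 1))) δ (2 * r)) := by
      rw [two_pow_succ_sub_one (q + 1), two_pow_succ_sub_one q]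
      exact hday.rinter_altn_rsub_altn_rinter_altn hα hβ hδ hδα hdα hdβ hdδ _
    intro a e hae
    have h := rcomp_mono hdouble (fun _ _ h => h) a e hae
    rw [altn_two_mul_rcomp_self hδ hr] at h
    rw [pow_succ']
    exact altn_two_mul_rsub_of_rcomp_rsub ih r a e h

end DayEqs

theorem stmt5_general {A : Type*} {r : ℕ} (hr : 0 < r) (d : ℕ → A → A → A → A → A)
    (hday : DayEqs (2 * r) d) (α β γ : A → A → Prop)
    (hα : Equivalence α) (hβ : Equivalence β) (hγ : Equivalence γ)
    (hdα : ∀ i, i ≤ 2 * r → pres4 (d i) α)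
    (hdβ : ∀ i, i ≤ 2 * r → pres4 (d i) β)
    (hdγ : ∀ i, i ≤ 2 * r → pres4 (d i) γ)
    (q : ℕ) :
    rsub (rinter α (altn β (rinter α γ) (2 ^ (q + 1) - 1)))
      (altn (rinter α β) (rinter α γ) (2 * r ^ q)) := by
  have hδ : Equivalence (rinter α γ) := (⟨α, hα⟩ ⊓ ⟨γ, hγ⟩ : Setoid A).iseqv
  have hdδ (i : ℕ) (hi : i ≤ 2 * r) : pres4 (d i) (rinter α γ) := (hdα i hi).rinter (hdγ i hi)
  intro a e hae
  exact hday.rcomp_rinter_altn_rsub hr hα hβ hδ (fun _ _ h => h.1) hdα hdβ hdδ q a e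
    ⟨e, hae, hδ.refl e⟩

/-- an algebra with Day operations `d 0, …, d 4` (4-modularity) is
`(2^q − 1, 2^q)`-modular for every `q ≥ 2`. -/
theorem stmt5 {A : Type*} (d : ℕ → A → A → A → A → A) (hday : DayEqs 4 d)
    (α β γ : A → A → Prop)
    (hα : Equivalence α) (hβ : Equivalence β) (hγ : Equivalence γ)
    (hdα : ∀ i, i ≤ 4 → pres4 (d i) α)
    (hdβ : ∀ i, i ≤ 4 → pres4 (d i) β)
    (hdγ : ∀ i, i ≤ 4 → pres4 (d i) γ)
    (q : ℕ) (hq : 2 ≤ q) :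
    rsub (rinter α (altn β (rinter α γ) (2 ^ q - 1)))
      (altn (rinter α β) (rinter α γ) (2 ^ q)) := by
  obtain ⟨n, rfl⟩ := Nat.exists_eq_add_one.mpr (Nat.zero_lt_of_lt hq)
  simpa only [← pow_succ'] using
    stmt5_general (r := 2) two_pos d hday α β γ hα hβ hγ hdα hdβ hdγ n
end

section
/- Let n be even and suppose an algebra A has Jónsson operations j_0, ..., j_{n+1} witnessing (n+1)-distributivity. Define quaternary operations d_0, ..., d_{2n} by d_{4i}(x,y,z,w) = j_{2i}(x,y,w), d_{4i+1}(x,y,z,w) = j_{2i+1}(x,y,w), d_{4i+2}(x,y,z,w) = j_{2i+1}(x,z,w), d_{4i+3}(x,y,z,w) = j_{2i+2}(x,z,w) for the appropriate range of i, with the final terms d_{2n−1}(x,y,z,w) = j_n(y,z,w) and d_{2n}(x,y,z,w) = w. Then d_0, ..., d_{2n} satisfy the Day equations, so A is 2n-modular. (Every (n+1)-distributive variety with n even is 2n-modular.) -/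
/-!
Using each Jónsson operation `j i` once as `j i (x, y, w)` and once as `j i (x, z, w)` gives a
sequence of Day operations of length `2n + 1`. For even `n` its entry at `2n - 1` is
`j n (x, z, w)`. Replacing it by `j n (y, z, w)` does not change its values at `(x, x, w, w)`, so
the link to the preceding operation survives; at `(x, y, y, w)` the new operation is
`j n (y, y, w) = j (n + 1) (y, y, w) = w`. The sequence can therefore jump to the last projection
at `2n`, one step earlier.
-/

/-- Day's sequence of quaternary operations built from ternary operations `j`: both `j k` and
`j (k + 1)` are applied to `x`, `w` and the same middle argument, which is `y` for even `k` and `z`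
for odd `k`, and these are the entries `2 * k` and `2 * k + 1`. -/
def dayTerm {A : Type*} (j : ℕ → A → A → A → A) (i : ℕ) (x y z w : A) : A :=
  j ((i + 1) / 2) x (if i / 2 % 2 = 0 then y else z) w

section

variable {A : Type*} {n : ℕ} (j : ℕ → A → A → A → A)

theorem dayTerm_two_mul (k : ℕ) (x y z w : A) :
    dayTerm j (2 * k) x y z w = j k x (if k % 2 = 0 then y else z) w := by
  rw [dayTerm, show (2 * k + 1) / 2 = k by omega, show 2 * k / 2 = k by omega]

theorem dayTerm_two_mul_add_one (k : ℕ) (x y z w : A) :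
    dayTerm j (2 * k + 1) x y z w = j (k + 1) x (if k % 2 = 0 then y else z) w := by
  rw [dayTerm, show (2 * k + 1 + 1) / 2 = k + 1 by omega, show (2 * k + 1) / 2 = k by omega]

theorem dayTerm_eq_ite_mod_four (i : ℕ) (x y z w : A) :
    dayTerm j i x y z w =
      if i % 4 = 0 then j (i / 2) x y w
      else if i % 4 = 1 then j ((i + 1) / 2) x y w
      else if i % 4 = 2 then j (i / 2) x z w
      else j ((i + 1) / 2) x z w := by
  unfold dayTerm
  split_ifs <;> grind

variable {j}

theorem JonssonEqs.dayEqs_dayTerm (hj : JonssonEqs n j) : DayEqs (2 * n + 1) (dayTerm j) := by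
  obtain ⟨idem, first, odd_step, even_step, last⟩ := hj
  refine ⟨fun i hi x y ↦ ?_, fun x y z w ↦ first _ _ _, fun i hi hi2 x w ↦ ?_,
    fun i hi hi2 x y w ↦ ?_, fun x y z w ↦ ?_⟩
  · rw [dayTerm, ite_self, idem _ (by omega)]
  · obtain ⟨k, rfl⟩ : ∃ k, i = 2 * k := ⟨i / 2, by omega⟩
    rw [dayTerm_two_mul, dayTerm_two_mul_add_one]
    split_ifs with hk
    · exact even_step k (by omega) hk x w
    · exact odd_step k (by omega) (by omega) x w
  · obtain ⟨k, rfl⟩ : ∃ k, i = 2 * k + 1 := ⟨i / 2, by omega⟩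
    rw [dayTerm_two_mul_add_one, show 2 * k + 1 + 1 = 2 * (k + 1) by ring, dayTerm_two_mul,
      ite_self, ite_self]
  · rw [dayTerm_two_mul_add_one, last]

theorem DayEqs.replace_tail {k m : ℕ} {d e : ℕ → A → A → A → A → A} (hd : DayEqs k d)
    (hmk : m < k) (hm : m % 2 = 0) (hed : ∀ i ≤ m, e i = d i)
    (he : ∀ x w, e (m + 1) x x w w = d (m + 1) x x w w)
    (he_last : ∀ x y w, e (m + 1) x y y w = w)
    (he_proj : ∀ x y z w, e (m + 2) x y z w = w) : DayEqs (m + 2) e := by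
  obtain ⟨idem, first, even_step, odd_step, -⟩ := hd
  refine ⟨fun i hi x y ↦ ?_, fun x y z w ↦ ?_, fun i hi hi2 x w ↦ ?_,
    fun i hi hi2 x y w ↦ ?_, he_proj⟩
  · obtain h | rfl | rfl : i ≤ m ∨ i = m + 1 ∨ i = m + 2 := by omega
    · rw [hed i h, idem i (by omega)]
    · exact he_last x y x
    · exact he_proj x y y x
  · rw [hed 0 m.zero_le, first]
  · obtain h | rfl : i < m ∨ i = m := by omega
    · rw [hed i h.le, hed (i + 1) h, even_step i (by omega) hi2]
    · rw [hed i le_rfl, he, even_step i hmk hi2]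
  · obtain h | rfl : i < m ∨ i = m + 1 := by omega
    · rw [hed i h.le, hed (i + 1) h, odd_step i (by omega) hi2]
    · rw [he_last, he_proj]

theorem JonssonEqs.apply_self_self_of_even (hj : JonssonEqs n j) (hn : Even n) (y w : A) :
    j n y y w = w := by
  obtain ⟨-, -, -, even_step, last⟩ := hj
  rw [even_step n le_rfl (Nat.even_iff.mp hn), last]

end

/-- if `n` is even and `j 0, …, j (n+1)` are Jónsson operations witnessing
`(n+1)`-distributivity, then the explicitly defined quaternary operations
`d 0, …, d (2n)` (with `d (4i) = j (2i) (x,y,w)`, `d (4i+1) = j (2i+1) (x,y,w)`,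
`d (4i+2) = j (2i+1) (x,z,w)`, `d (4i+3) = j (2i+2) (x,z,w)`, overridden by
`d (2n−1) = j n (y,z,w)` and `d (2n) = w`) satisfy the Day equations, so the algebra
is `2n`-modular. -/
theorem stmt13 {A : Type*} (n : ℕ) (hn : Even n) (hn0 : 0 < n)
    (j : ℕ → A → A → A → A) (hj : JonssonEqs n j)
    (d : ℕ → A → A → A → A → A)
    (hd : ∀ i x y z w, d i x y z w =
      if i = 2 * n then w
      else if i = 2 * n - 1 then j n y z w
      else if i % 4 = 0 then j (i / 2) x y w
      else if i % 4 = 1 then j ((i + 1) / 2) x y w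
      else if i % 4 = 2 then j (i / 2) x z w
      else j ((i + 1) / 2) x z w) :
    DayEqs (2 * n) d := by
  obtain ⟨m, rfl⟩ : ∃ m, n = m + 1 := ⟨n - 1, by omega⟩
  have hm : ¬ m % 2 = 0 := by simpa only [Nat.even_add_one, Nat.even_iff] using hn
  have d_eq_dayTerm : ∀ i ≤ 2 * m, d i = dayTerm j i := fun i hi ↦ by
    funext x y z w
    rw [hd, if_neg (by omega), if_neg (by omega), dayTerm_eq_ite_mod_four]
  have d_penultimate (x y z w : A) : d (2 * m + 1) x y z w = j (m + 1) y z w := by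
    rw [hd, if_neg (by omega), if_pos (by omega)]
  have d_last (x y z w : A) : d (2 * m + 2) x y z w = w := by
    rw [hd, if_pos (by omega)]
  refine hj.dayEqs_dayTerm.replace_tail (m := 2 * m) (by omega) (by omega) d_eq_dayTerm
    (fun x w ↦ ?_) (fun x y w ↦ ?_) d_last
  · rw [d_penultimate, dayTerm_two_mul_add_one, if_neg hm]
  · rw [d_penultimate, hj.apply_self_self_of_even hn]
end
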